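/- arXiv:1312.5059 — 10 statements merged into one kernel-verified Lean document; each statement's English description precedes it below -/
import Mathlib

section
/- The family of piecewise syndetic subsets of ℤ is partition regular: if A ⊆ ℤ is piecewise syndetic and A = A₁ ∪ ... ∪ Aₙ is a finite partition (or just a finite cover) of A, then at least one piece Aᵢ is piecewise syndetic. -/
/-!
Call `y` `k`-good for `A` if `[y, y + k)` meets `A`. A set is piecewise syndetic iff for some `k`
its set `G` of `k`-good points is thick (`piecewiseSyndetic_iff`); for the nontrivial direction,
`A = (A ∪ G) ∩ (A ∪ Gᶜ)`, where the first factor is thick and the second is syndetic.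

By induction it is enough to treat a union `B ∪ C` of two sets (`PiecewiseSyndetic.of_union`).
Let the `k`-good points of `B ∪ C` be thick. If those of `B` are not, then for some `N` every
interval of length `N` contains a `y` with `[y, y + k)` disjoint from `B`. Inside a long interval
of `k`-good points of `B ∪ C`, such a `[y, y + k)` must meet `C`, so `C` has gaps at most `N + k`
there.
-/

/-- A set of integers is thick if it includes arbitrarily long intervals. -/
def Thick (A : Set ℤ) : Prop :=
  ∀ n : ℕ, ∃ x : ℤ, Set.Ico x (x + n) ⊆ A

/-- A set of integers is syndetic if it has bounded gaps. -/
def Syndetic (A : Set ℤ) : Prop :=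
  ∃ k : ℕ, ∀ x : ℤ, (Set.Ico x (x + k) ∩ A).Nonempty

/-- A set of integers is piecewise syndetic if it is the intersection of a
thick set and a syndetic set. -/
def PiecewiseSyndetic (A : Set ℤ) : Prop :=
  ∃ T S : Set ℤ, Thick T ∧ Syndetic S ∧ A = T ∩ S

/-- Piecewise syndeticity as "gaps bounded by `k` on arbitrarily long intervals". -/
theorem piecewiseSyndetic_iff (A : Set ℤ) :
    PiecewiseSyndetic A ↔
      ∃ k : ℕ, Thick {y : ℤ | (Set.Ico y (y + k) ∩ A).Nonempty} := by
  constructor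
  · rintro ⟨T, S, hT, ⟨k, hk⟩, rfl⟩
    refine ⟨k, fun n => ?_⟩
    -- The extra `k` keeps every window starting in `[x, x + n)` inside `T`.
    obtain ⟨x, hx⟩ := hT (n + k)
    refine ⟨x, fun y hy => ?_⟩
    obtain ⟨z, hz, hzS⟩ := hk y
    refine ⟨z, hz, hx ?_, hzS⟩
    simp only [Set.mem_Ico] at hy hz ⊢
    push_cast
    omega
  · rintro ⟨k, hk⟩
    set G : Set ℤ := {y : ℤ | (Set.Ico y (y + k) ∩ A).Nonempty} with hG
    refine ⟨A ∪ G, A ∪ Gᶜ, fun n => ?_, ⟨k + 1, fun x => ?_⟩, ?_⟩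
    · obtain ⟨x, hx⟩ := hk n
      exact ⟨x, hx.trans Set.subset_union_right⟩
    · by_cases hxG : x ∈ G
      · obtain ⟨z, hz, hzA⟩ := hxG
        refine ⟨z, ?_, Or.inl hzA⟩
        simp only [Set.mem_Ico] at hz ⊢
        push_cast
        omega
      · refine ⟨x, ?_, Or.inr hxG⟩
        simp only [Set.mem_Ico]
        push_cast
        omega
    · rw [← Set.union_inter_distrib_left, Set.inter_compl_self, Set.union_empty]

theorem PiecewiseSyndetic.of_union {B C : Set ℤ} (h : PiecewiseSyndetic (B ∪ C)) :
    PiecewiseSyndetic B ∨ PiecewiseSyndetic C := by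
  by_cases hB : PiecewiseSyndetic B
  · exact Or.inl hB
  right
  rw [piecewiseSyndetic_iff] at h hB ⊢
  obtain ⟨k, hk⟩ := h
  have hN : ¬ Thick {y : ℤ | (Set.Ico y (y + k) ∩ B).Nonempty} := fun h' => hB ⟨k, h'⟩
  simp only [Thick, not_forall, not_exists, Set.not_subset] at hN
  obtain ⟨N, hN⟩ := hN
  refine ⟨N + k, fun n => ?_⟩
  obtain ⟨x, hx⟩ := hk (n + N)
  refine ⟨x, fun u hu => ?_⟩
  obtain ⟨y, hy, hyB⟩ := hN u
  have hyx : y ∈ Set.Ico x (x + (n + N : ℕ)) := by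
    simp only [Set.mem_Ico] at hu hy ⊢
    push_cast
    omega
  obtain ⟨z, hz, hzB | hzC⟩ := hx hyx
  · exact absurd ⟨z, hz, hzB⟩ hyB
  · refine ⟨z, ?_, hzC⟩
    simp only [Set.mem_Ico] at hy hz ⊢
    push_cast
    omega

theorem not_piecewiseSyndetic_empty : ¬ PiecewiseSyndetic ∅ := by
  rw [piecewiseSyndetic_iff]
  rintro ⟨k, hk⟩
  obtain ⟨x, hx⟩ := hk 1
  obtain ⟨z, -, hz⟩ := hx (show x ∈ Set.Ico x (x + (1 : ℕ)) by simp)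
  exact hz

/-- The family of piecewise syndetic sets is partition regular: if a piecewise
syndetic set is written as a finite union, one of the pieces is piecewise
syndetic. -/
theorem piecewiseSyndetic_partition_regular (A : Set ℤ)
    (hA : PiecewiseSyndetic A) (n : ℕ) (C : Fin n → Set ℤ)
    (hcover : A = ⋃ i, C i) :
    ∃ i, PiecewiseSyndetic (C i) := by
  have key : ∀ s : Finset (Fin n), PiecewiseSyndetic (⋃ i ∈ s, C i) →
      ∃ i, PiecewiseSyndetic (C i) := by
    intro s
    induction s using Finset.induction_on with
    | empty =>
      intro h
      exact absurd (by simpa using h) not_piecewiseSyndetic_empty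
    | insert a s _ ih =>
      intro h
      rw [Finset.set_biUnion_insert] at h
      exact h.of_union.elim (fun h => ⟨a, h⟩) ih
  refine key Finset.univ ?_
  simpa [← hcover] using hA
end

section
/- Jin's embeddability theorem: Let A ⊆ ℤ with upper Banach density BD(A) = β > 0. Then there exists a set E ⊆ ℕ with Schnirelmann density σ(E) ≥ β such that E is finitely embeddable in A, i.e. for every finite F ⊆ E there exists t ∈ ℤ with t + F ⊆ A. -/
/-!
If every integer `x` were followed by an interval `[x+1, x+k]` with `1 ≤ k ≤ N` on which `A` has
relative density at most `γ`, then tiling a long interval by such short ones would bound the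
density of `A` on it by `γ + N / n`, so `BD(A) ≤ γ` (`upperBanachDensity_le_of_short`). Hence for
every `γ < BD(A)` and every `N` some translate of `A` has relative density greater than `γ` on all
the initial segments `[1, k]`, `k ≤ N` (`exists_good_start`).

Choosing such translates `A - t N` with `γ = β - 1 / (N + 1)`, the set `E` is their limit along a
nonprincipal ultrafilter. On a finite window `E` agrees with `A - t N` for almost all `N`, which
gives both finite embeddability and the lower bound on the initial counts of `E`.
-/

/-- The upper Banach density of a set of integers: the infimum over interval
lengths `n+1 ≥ 1` of the supremum over positions of the relative density of
`A` in an interval of that length. -/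
noncomputable def upperBanachDensity (A : Set ℤ) : ℝ :=
  ⨅ n : ℕ, ⨆ x : ℤ, ((A ∩ Set.Icc (x + 1) (x + (n : ℤ) + 1)).ncard : ℝ) / ((n : ℝ) + 1)

/-- The Schnirelmann density of a set of natural numbers (`ℕ = {1,2,3,…}`). -/
noncomputable def schnirelmannDensity' (E : Set ℕ) : ℝ :=
  ⨅ n : ℕ, ((E ∩ Set.Icc 1 (n + 1)).ncard : ℝ) / ((n : ℝ) + 1)

/-- The number of elements of `A` in the interval `[x+1, x+n]`. -/
noncomputable def blockCount (A : Set ℤ) (x : ℤ) (n : ℕ) : ℕ :=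
  (A ∩ Set.Icc (x + 1) (x + n)).ncard

lemma blockCount_le (A : Set ℤ) (x : ℤ) (n : ℕ) : blockCount A x n ≤ n := by
  calc blockCount A x n ≤ (Set.Icc (x + 1) (x + n)).ncard :=
        Set.ncard_le_ncard Set.inter_subset_right (Set.finite_Icc _ _)
    _ = n := by
        rw [← Finset.coe_Icc, Set.ncard_coe_finset, Int.card_Icc]
        omega

lemma blockCount_add_le (A : Set ℤ) (x : ℤ) (m n : ℕ) :
    blockCount A x (m + n) ≤ blockCount A x m + blockCount A (x + m) n := by
  unfold blockCount
  refine (Set.ncard_le_ncard ?_ (((Set.finite_Icc _ _).inter_of_right _).union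
    ((Set.finite_Icc _ _).inter_of_right _))).trans (Set.ncard_union_le _ _)
  rintro y ⟨hA, h1, h2⟩
  push_cast at h2
  by_cases h : y ≤ x + m
  · exact Or.inl ⟨hA, h1, h⟩
  · exact Or.inr ⟨hA, by omega, by omega⟩

/-- Tiling by short sparse intervals bounds the count on any interval; the error `N` accounts
for the incomplete last tile. -/
lemma blockCount_le_of_short {A : Set ℤ} {γ : ℝ} {N : ℕ}
    (h : ∀ x : ℤ, ∃ k : ℕ, 1 ≤ k ∧ k ≤ N ∧ (blockCount A x k : ℝ) ≤ γ * k) (n : ℕ) :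
    ∀ x : ℤ, (blockCount A x n : ℝ) ≤ γ * n + N := by
  have hγ : 0 ≤ γ := by
    obtain ⟨k, hk, -, hc⟩ := h 0
    have hk' : (0 : ℝ) < k := by exact_mod_cast hk
    exact nonneg_of_mul_nonneg_left ((Nat.cast_nonneg _).trans hc) hk'
  induction n using Nat.strong_induction_on with
  | _ n ih =>
    intro x
    by_cases hn : n ≤ N
    · have h1 : (blockCount A x n : ℝ) ≤ N := by exact_mod_cast (blockCount_le A x n).trans hn
      have h2 : 0 ≤ γ * n := by positivity
      linarith
    · obtain ⟨k, hk, hkN, hc⟩ := h x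
      obtain ⟨m, rfl⟩ : ∃ m, n = k + m := ⟨n - k, by omega⟩
      have h1 := ih m (by omega) (x + k)
      have h2 : (blockCount A x (k + m) : ℝ) ≤ blockCount A x k + blockCount A (x + k) m := by
        exact_mod_cast blockCount_add_le A x k m
      push_cast
      linarith

lemma upperBanachDensity_le_of_short {A : Set ℤ} {γ : ℝ} {N : ℕ}
    (h : ∀ x : ℤ, ∃ k : ℕ, 1 ≤ k ∧ k ≤ N ∧ (blockCount A x k : ℝ) ≤ γ * k) :
    upperBanachDensity A ≤ γ := by
  have key (n : ℕ) : upperBanachDensity A ≤ γ + (N : ℝ) * (1 / ((n : ℝ) + 1)) := by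
    refine (ciInf_le ⟨0, ?_⟩ n).trans (ciSup_le fun x => ?_)
    · rintro _ ⟨m, rfl⟩
      exact Real.iSup_nonneg fun x => by positivity
    · have h1 := blockCount_le_of_short h (n + 1) x
      have hn : (0 : ℝ) < (n : ℝ) + 1 := by positivity
      unfold blockCount at h1
      push_cast at h1
      rw [← add_assoc] at h1
      rw [div_le_iff₀ hn]
      field_simp
      linarith
  have lim : Filter.Tendsto (fun n : ℕ => γ + (N : ℝ) * (1 / ((n : ℝ) + 1)))
      Filter.atTop (nhds γ) := by
    simpa using (tendsto_one_div_add_atTop_nhds_zero_nat (𝕜 := ℝ)).const_mul (N : ℝ)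
      |>.const_add γ
  exact ge_of_tendsto' lim key

lemma exists_good_start {A : Set ℤ} {γ : ℝ} (hγ : γ < upperBanachDensity A) (N : ℕ) :
    ∃ t : ℤ, ∀ k : ℕ, 1 ≤ k → k ≤ N → γ * k < blockCount A t k := by
  by_contra! h
  exact hγ.not_ge (upperBanachDensity_le_of_short h)

/-- If `E` and `A - t` agree on `[1, n]`, they have the same number of elements there. -/
lemma ncard_eq_blockCount {A : Set ℤ} {E : Set ℕ} {t : ℤ} {n : ℕ}
    (h : ∀ m ∈ Finset.Icc 1 n, (m ∈ E ↔ t + (m : ℤ) ∈ A)) :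
    (E ∩ Set.Icc 1 n).ncard = blockCount A t n := by
  have hinj : Function.Injective fun m : ℕ => t + (m : ℤ) := fun a b hab => by
    simpa using hab
  rw [← Set.ncard_image_of_injective _ hinj, blockCount]
  congr 1
  ext y
  constructor
  · rintro ⟨m, ⟨hE, h1, h2⟩, rfl⟩
    exact ⟨(h m (Finset.mem_Icc.2 ⟨h1, h2⟩)).1 hE, by dsimp only; omega, by dsimp only; omega⟩
  · rintro ⟨hA, h1, h2⟩
    have hy : t + ((y - t).toNat : ℤ) = y := by omega
    have hm : 1 ≤ (y - t).toNat ∧ (y - t).toNat ≤ n := by omega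
    exact ⟨(y - t).toNat, ⟨(h _ (Finset.mem_Icc.2 hm)).2 (by rwa [hy]), hm⟩, hy⟩

/-- Jin's embeddability theorem: if `BD(A) = β > 0`, then there is a set
`E ⊆ ℕ = {1,2,3,…}` of Schnirelmann density at least `β` which is finitely
embeddable in `A`. -/
theorem jin_embeddability (A : Set ℤ) (β : ℝ)
    (hβ : upperBanachDensity A = β) (hpos : 0 < β) :
    ∃ E : Set ℕ, (∀ m ∈ E, 1 ≤ m) ∧ β ≤ schnirelmannDensity' E ∧
      ∀ F : Finset ℕ, ↑F ⊆ E → ∃ t : ℤ, ∀ a ∈ F, t + (a : ℤ) ∈ A := by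
  subst hβ
  have hγ (N : ℕ) : upperBanachDensity A - 1 / ((N : ℝ) + 1) < upperBanachDensity A :=
    sub_lt_self _ (by positivity)
  choose t ht using fun N : ℕ => exists_good_start (hγ N) N
  let U : Ultrafilter ℕ := Filter.hyperfilter ℕ
  have hU : (U : Filter ℕ) ≤ Filter.atTop := Nat.hyperfilter_le_atTop
  let E : Set ℕ := {m | 1 ≤ m ∧ ∀ᶠ N in (U : Filter ℕ), t N + (m : ℤ) ∈ A}
  refine ⟨E, fun m hm => hm.1, ?_, ?_⟩
  · refine le_ciInf fun n => ?_
    -- Since `U` is an ultrafilter, it decides each membership in the finite window `[1, n+1]`.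
    have hagree : ∀ᶠ N in (U : Filter ℕ), ∀ m ∈ Finset.Icc 1 (n + 1),
        (m ∈ E ↔ t N + (m : ℤ) ∈ A) := by
      rw [Filter.eventually_all_finset]
      intro m hm
      have hm1 := (Finset.mem_Icc.1 hm).1
      by_cases hmE : ∀ᶠ N in (U : Filter ℕ), t N + (m : ℤ) ∈ A
      · filter_upwards [hmE] with N hN
        exact iff_of_true ⟨hm1, hmE⟩ hN
      · filter_upwards [Ultrafilter.eventually_not.2 hmE] with N hN
        exact iff_of_false (fun h => hmE h.2) hN
    have lim : Filter.Tendsto (fun N : ℕ => upperBanachDensity A - 1 / ((N : ℝ) + 1))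
        (U : Filter ℕ) (nhds (upperBanachDensity A)) := by
      simpa using ((tendsto_one_div_add_atTop_nhds_zero_nat (𝕜 := ℝ)).const_sub
        (upperBanachDensity A)).mono_left hU
    refine le_of_tendsto lim ?_
    filter_upwards [hagree, hU (Filter.eventually_ge_atTop (n + 1))] with N hN hnN
    have h1 := ht N (n + 1) (by omega) hnN
    rw [ncard_eq_blockCount hN, le_div_iff₀ (by positivity)]
    push_cast at h1
    exact h1.le
  · intro F hF
    have h : ∀ᶠ N in (U : Filter ℕ), ∀ a ∈ F, t N + (a : ℤ) ∈ A :=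
      (Filter.eventually_all_finset F).2 fun a ha => (hF ha).2
    obtain ⟨N, hN⟩ := h.exists
    exact ⟨t N, hN⟩
end

section
/- Dense embeddability strengthening of Jin's theorem: Let A ⊆ ℤ with upper Banach density BD(A) = β > 0. Then there exists a set E ⊆ ℕ with Schnirelmann density σ(E) ≥ β such that E is densely finitely embedded in A: for every finite F ⊆ E, the set {t ∈ ℤ : t + F ⊆ A} has positive upper Banach density. -/
/-- The number of elements of `S` in `{x, …, x + n - 1}`, as a real number. -/
noncomputable def wt (S : Set ℤ) (x : ℤ) (n : ℕ) : ℝ :=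
  ∑ i ∈ Finset.range n, S.indicator 1 (x + (i : ℤ))

lemma ncard_inter_image {ι α : Type*} (S : Set α) (s : Finset ι) (f : ι → α)
    (hf : Function.Injective f) :
    ((S ∩ f '' s).ncard : ℝ) = ∑ i ∈ s, S.indicator 1 (f i) := by
  classical
  have h : S ∩ f '' s = f '' ((s.filter fun i => f i ∈ S : Finset ι) : Set ι) := by
    ext y
    simp only [Set.mem_inter_iff, Set.mem_image, Finset.mem_coe, Finset.mem_filter]
    constructor
    · rintro ⟨hy, i, hi, rfl⟩
      exact ⟨i, ⟨hi, hy⟩, rfl⟩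
    · rintro ⟨i, ⟨hi, hy⟩, rfl⟩
      exact ⟨hy, i, hi, rfl⟩
  rw [h, Set.ncard_image_of_injective _ hf, Set.ncard_coe_finset, Finset.card_filter]
  push_cast
  exact Finset.sum_congr rfl fun i _ => by simp [Set.indicator_apply]

lemma ncard_eq_wt (S : Set ℤ) (x : ℤ) (n : ℕ) :
    ((S ∩ Set.Icc (x + 1) (x + (n : ℤ) + 1)).ncard : ℝ) = wt S (x + 1) (n + 1) := by
  rw [wt, ← ncard_inter_image S (Finset.range (n + 1)) (fun i : ℕ => x + 1 + (i : ℤ))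
    (fun a b h => by simpa using h)]
  congr 3
  ext y
  simp only [Set.mem_Icc, Set.mem_image, Finset.mem_coe, Finset.mem_range]
  constructor
  · rintro ⟨h1, h2⟩
    exact ⟨(y - x - 1).toNat, by omega, by omega⟩
  · rintro ⟨i, hi, rfl⟩
    omega

lemma ncard_eq_sum (E : Set ℕ) (n : ℕ) :
    ((E ∩ Set.Icc 1 (n + 1)).ncard : ℝ) =
      ∑ i ∈ Finset.range (n + 1), E.indicator 1 (i + 1) := by
  rw [← ncard_inter_image E (Finset.range (n + 1)) (fun i : ℕ => i + 1)
    (fun a b h => by simpa using h)]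
  congr 3
  ext y
  simp only [Set.mem_Icc, Set.mem_image, Finset.mem_coe, Finset.mem_range]
  constructor
  · rintro ⟨h1, h2⟩
    exact ⟨y - 1, by omega, by omega⟩
  · rintro ⟨i, hi, rfl⟩
    omega

lemma indicator_one_nonneg (S : Set ℤ) (x : ℤ) : (0 : ℝ) ≤ S.indicator 1 x :=
  Set.indicator_nonneg (fun _ _ => zero_le_one) x

lemma indicator_one_le (S : Set ℤ) (x : ℤ) : (S.indicator 1 x : ℝ) ≤ 1 := by
  classical
  rw [Set.indicator_apply]
  split_ifs <;> simp

lemma wt_nonneg (S : Set ℤ) (x : ℤ) (n : ℕ) : 0 ≤ wt S x n :=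
  Finset.sum_nonneg fun _ _ => indicator_one_nonneg _ _

lemma wt_le (S : Set ℤ) (x : ℤ) (n : ℕ) : wt S x n ≤ n := by
  calc wt S x n ≤ ∑ i ∈ Finset.range n, (1 : ℝ) :=
        Finset.sum_le_sum fun _ _ => indicator_one_le _ _
    _ = n := by simp

lemma wt_union_le (S T : Set ℤ) (x : ℤ) (n : ℕ) : wt (S ∪ T) x n ≤ wt S x n + wt T x n := by
  classical
  rw [wt, wt, wt, ← Finset.sum_add_distrib]
  refine Finset.sum_le_sum fun i _ => ?_
  by_cases h1 : x + (i : ℤ) ∈ S <;> by_cases h2 : x + (i : ℤ) ∈ T <;>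
    simp [h1, h2]

lemma wt_mono {S T : Set ℤ} (h : S ⊆ T) (x : ℤ) (n : ℕ) : wt S x n ≤ wt T x n :=
  Finset.sum_le_sum fun _ _ => Set.indicator_le_indicator_of_subset h (fun _ => zero_le_one) _

/-- The walking argument: if from every point a jump of length at most `N` crosses a block over
which `h ≤ 1` has nonpositive sum, then all block sums are bounded by `N`, the contribution of the
last, incomplete jump. -/
lemma greedy (h : ℤ → ℝ) (N : ℕ) (h1 : ∀ t, h t ≤ 1)
    (hN : ∀ t, ∃ n : ℕ, 1 ≤ n ∧ n ≤ N ∧ ∑ i ∈ Finset.range n, h (t + (i : ℤ)) ≤ 0) (L : ℕ) :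
    ∀ x, ∑ i ∈ Finset.range L, h (x + (i : ℤ)) ≤ N := by
  induction L using Nat.strong_induction_on with
  | _ L ih =>
    intro x
    obtain ⟨n, hn1, hnN, hn⟩ := hN x
    rcases le_total n L with hle | hle
    · obtain ⟨m, rfl⟩ := Nat.exists_eq_add_of_le hle
      have := ih m (by omega) (x + n)
      rw [Finset.sum_range_add]
      have e : ∑ i ∈ Finset.range m, h (x + ((n + i : ℕ) : ℤ))
          = ∑ i ∈ Finset.range m, h (x + n + (i : ℤ)) :=
        Finset.sum_congr rfl fun i _ => by push_cast; rw [add_assoc]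
      rw [e]
      linarith
    · calc ∑ i ∈ Finset.range L, h (x + (i : ℤ)) ≤ ∑ i ∈ Finset.range L, (1 : ℝ) :=
            Finset.sum_le_sum fun _ _ => h1 _
        _ = L := by simp
        _ ≤ N := by exact_mod_cast hle.trans hnN

lemma density_eq (S : Set ℤ) :
    upperBanachDensity S = ⨅ n : ℕ, ⨆ x : ℤ, wt S (x + 1) (n + 1) / ((n : ℝ) + 1) := by
  simp only [upperBanachDensity, ncard_eq_wt]

lemma wt_div_bdd (S : Set ℤ) (n : ℕ) :
    BddAbove (Set.range fun x : ℤ => wt S (x + 1) (n + 1) / ((n : ℝ) + 1)) := by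
  refine ⟨1, ?_⟩
  rintro _ ⟨x, rfl⟩
  have := wt_le S (x + 1) (n + 1)
  push_cast at this
  exact (div_le_one (by positivity)).2 this

lemma wt_le_of_density_lt {S : Set ℤ} {r : ℝ} (hr : 0 ≤ r) (h : upperBanachDensity S < r) :
    ∃ C : ℝ, ∀ x n, wt S x n ≤ r * n + C := by
  rw [density_eq] at h
  obtain ⟨m, hm⟩ := exists_lt_of_ciInf_lt h
  refine ⟨(m + 1 : ℕ), fun x n => ?_⟩
  have key := greedy (fun t => S.indicator 1 t - r) (m + 1)
    (fun t => by have := indicator_one_le S t; linarith)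
    (fun t => ⟨m + 1, by omega, le_rfl, by
      have h1 := (le_ciSup (wt_div_bdd S m) (t - 1)).trans hm.le
      rw [div_le_iff₀ (by positivity), sub_add_cancel, wt] at h1
      rw [Finset.sum_sub_distrib]
      simp only [Finset.sum_const, Finset.card_range, nsmul_eq_mul]
      push_cast
      linarith⟩) n x
  rw [Finset.sum_sub_distrib] at key
  simp only [Finset.sum_const, Finset.card_range, nsmul_eq_mul] at key
  rw [wt]
  linarith

lemma density_le_of_wt_le {S : Set ℤ} {r C : ℝ} (h : ∀ x n, wt S x n ≤ r * n + C) :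
    upperBanachDensity S ≤ r := by
  rw [density_eq]
  refine le_of_forall_pos_le_add fun ε hε => ?_
  obtain ⟨n, hn⟩ := exists_nat_gt (C / ε)
  have hb : BddBelow (Set.range fun n : ℕ => ⨆ x : ℤ, wt S (x + 1) (n + 1) / ((n : ℝ) + 1)) := by
    refine ⟨0, ?_⟩
    rintro _ ⟨n, rfl⟩
    exact Real.iSup_nonneg fun x => div_nonneg (wt_nonneg _ _ _) (by positivity)
  refine (ciInf_le hb n).trans (ciSup_le fun x => ?_)
  rw [div_le_iff₀ (by positivity)]
  rw [div_lt_iff₀ hε] at hn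
  have := h (x + 1) (n + 1)
  push_cast at this
  nlinarith

/-- Sets of upper Banach density zero. -/
def BNull (S : Set ℤ) : Prop := upperBanachDensity S ≤ 0

lemma BNull.mono {S T : Set ℤ} (h : S ⊆ T) (hT : BNull T) : BNull S := by
  refine le_of_forall_pos_le_add fun ε hε => ?_
  obtain ⟨C, hC⟩ := wt_le_of_density_lt hε.le (hT.trans_lt hε)
  rw [zero_add]
  exact density_le_of_wt_le fun x n => (wt_mono h x n).trans (hC x n)

lemma BNull.union {S T : Set ℤ} (hS : BNull S) (hT : BNull T) : BNull (S ∪ T) := by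
  refine le_of_forall_pos_le_add fun ε hε => ?_
  obtain ⟨C, hC⟩ := wt_le_of_density_lt (half_pos hε).le (hS.trans_lt (half_pos hε))
  obtain ⟨D, hD⟩ := wt_le_of_density_lt (half_pos hε).le (hT.trans_lt (half_pos hε))
  rw [zero_add]
  refine density_le_of_wt_le (C := C + D) fun x n => ?_
  have := wt_union_le S T x n
  have := hC x n
  have := hD x n
  linarith

lemma bnull_empty : BNull ∅ :=
  density_le_of_wt_le (C := 0) fun x n => by simp [wt]

/-- The largest fraction below `β` with denominator at most `N` (or `0`) serves as `δ`. -/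
lemma exists_gap {β : ℝ} (hβ : 0 < β) (N : ℕ) :
    ∃ δ, 0 ≤ δ ∧ δ < β ∧ ∀ n : ℕ, 1 ≤ n → n ≤ N → ∀ k : ℕ, (k : ℝ) < β * n → (k : ℝ) ≤ δ * n := by
  induction N with
  | zero => exact ⟨0, le_rfl, hβ, fun n h1 h2 => by omega⟩
  | succ N ih =>
    obtain ⟨δ, h0, h1, h2⟩ := ih
    have hp : (0 : ℝ) < (N + 1 : ℕ) := by positivity
    set c : ℝ := (⌈β * (N + 1 : ℕ)⌉ : ℝ) - 1 with hc
    have hcl : c < β * (N + 1 : ℕ) := by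
      have := Int.ceil_lt_add_one (β * (N + 1 : ℕ))
      linarith
    refine ⟨max δ (c / (N + 1 : ℕ)), le_max_of_le_left h0,
      max_lt h1 ((div_lt_iff₀ hp).2 hcl), fun n hn1 hn2 k hk => ?_⟩
    rcases Nat.lt_or_ge N n with h | h
    · obtain rfl : n = N + 1 := by omega
      have hk' : (k : ℤ) < ⌈β * (N + 1 : ℕ)⌉ := Int.lt_ceil.2 (by exact_mod_cast hk)
      have hk2 : (k : ℝ) ≤ c := by
        have : (k : ℤ) + 1 ≤ ⌈β * (N + 1 : ℕ)⌉ := hk'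
        have : ((k : ℝ) + 1) ≤ (⌈β * (N + 1 : ℕ)⌉ : ℝ) := by exact_mod_cast this
        linarith
      calc (k : ℝ) ≤ c / (N + 1 : ℕ) * (N + 1 : ℕ) := by rw [div_mul_cancel₀ _ hp.ne']; exact hk2
        _ ≤ _ := by gcongr; exact le_max_right _ _
    · calc (k : ℝ) ≤ δ * n := h2 n hn1 h k hk
        _ ≤ _ := by gcongr; exact le_max_left _ _

/-- The set `T N` of points `t` such that `|A ∩ [t+1, t+n]| ≥ β n` for all `1 ≤ n ≤ N`. -/
def good (A : Set ℤ) (β : ℝ) (N : ℕ) : Set ℤ :=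
  {t | ∀ n : ℕ, 1 ≤ n → n ≤ N → β * n ≤ wt A (t + 1) n}

lemma good_anti (A : Set ℤ) (β : ℝ) {M N : ℕ} (h : M ≤ N) : good A β N ⊆ good A β M :=
  fun _ ht n h1 h2 => ht n h1 (h2.trans h)

lemma not_null_good {A : Set ℤ} {β : ℝ} (hβ : upperBanachDensity A = β) (hpos : 0 < β) (N : ℕ) :
    ¬ BNull (good A β N) := by
  classical
  intro hnull
  obtain ⟨δ, h0, h1, h2⟩ := exists_gap hpos N
  set ε := (β - δ) / 2 with hε
  have hεp : 0 < ε := by rw [hε]; linarith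
  obtain ⟨C, hC⟩ := wt_le_of_density_lt hεp.le (hnull.trans_lt hεp)
  have key := greedy
    (fun t => A.indicator 1 (t + 1) - δ - (good A β N).indicator 1 t) (N + 1)
    (fun t => by
      have := indicator_one_le A (t + 1)
      have := indicator_one_nonneg (good A β N) t
      linarith)
    (fun t => by
      by_cases ht : t ∈ good A β N
      · refine ⟨1, le_rfl, by omega, ?_⟩
        have := indicator_one_le A (t + 1)
        simp [ht]
        linarith
      · have ht' := ht
        simp only [good, Set.mem_ofPred_eq, not_forall, not_le] at ht'
        obtain ⟨n, hn1, hn2, hn⟩ := ht'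
        refine ⟨n, hn1, by omega, ?_⟩
        obtain ⟨m, rfl⟩ : ∃ m, n = m + 1 := ⟨n - 1, by omega⟩
        have hle : wt A (t + 1) (m + 1) ≤ δ * (m + 1 : ℕ) := by
          rw [← ncard_eq_wt] at hn ⊢
          exact h2 _ hn1 hn2 _ hn
        have hs : wt A (t + 1) (m + 1)
            = ∑ i ∈ Finset.range (m + 1), A.indicator 1 (t + (i : ℤ) + 1) :=
          Finset.sum_congr rfl fun i _ => by rw [add_right_comm]
        have hg := wt_nonneg (good A β N) t (m + 1)
        rw [wt] at hg
        rw [Finset.sum_sub_distrib, Finset.sum_sub_distrib, ← hs]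
        simp only [Finset.sum_const, Finset.card_range, nsmul_eq_mul]
        linarith)
  have : upperBanachDensity A ≤ δ + ε := by
    refine density_le_of_wt_le (C := C + (N + 1 : ℕ)) fun x n => ?_
    have hk := key n (x - 1)
    have hs : wt A x n = ∑ i ∈ Finset.range n, A.indicator 1 (x - 1 + (i : ℤ) + 1) :=
      Finset.sum_congr rfl fun i _ => by congr 1; ring
    have hg := hC (x - 1) n
    rw [wt] at hg
    rw [Finset.sum_sub_distrib, Finset.sum_sub_distrib, ← hs] at hk
    simp only [Finset.sum_const, Finset.card_range, nsmul_eq_mul] at hk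
    linarith
  rw [hβ, hε] at this
  linarith

/-- The filter generated by the sets `good A β N` and the complements of sets of density zero. -/
def goodFilter (A : Set ℤ) (β : ℝ) : Filter ℤ where
  sets := {S | ∃ N, BNull (good A β N \ S)}
  univ_sets := ⟨0, by simpa using bnull_empty⟩
  sets_of_superset := by
    rintro S T ⟨N, hN⟩ h
    exact ⟨N, hN.mono (Set.sdiff_subset_sdiff_right h)⟩
  inter_sets := by
    rintro S T ⟨M, hM⟩ ⟨N, hN⟩
    refine ⟨max M N, (hM.union hN).mono ?_⟩
    rw [Set.sdiff_inter]
    exact Set.union_subset_union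
      (Set.sdiff_subset_sdiff_left (good_anti A β (le_max_left _ _)))
      (Set.sdiff_subset_sdiff_left (good_anti A β (le_max_right _ _)))

lemma exists_ultrafilter {A : Set ℤ} {β : ℝ} (hβ : upperBanachDensity A = β) (hpos : 0 < β) :
    ∃ U : Ultrafilter ℤ, (∀ N, good A β N ∈ U) ∧ ∀ S ∈ U, 0 < upperBanachDensity S := by
  have hne : (goodFilter A β).NeBot := by
    refine ⟨fun h => ?_⟩
    have : ∅ ∈ goodFilter A β := by rw [h]; exact Filter.mem_bot
    obtain ⟨N, hN⟩ := this
    rw [Set.sdiff_empty] at hN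
    exact not_null_good hβ hpos N hN
  refine ⟨Ultrafilter.of (goodFilter A β), fun N => ?_, fun S hS => ?_⟩
  · exact Ultrafilter.of_le _ ⟨N, by simpa using bnull_empty⟩
  · by_contra hcon
    have hnull : BNull S := not_lt.1 hcon
    have hc : Sᶜ ∈ Ultrafilter.of (goodFilter A β) :=
      Ultrafilter.of_le _ ⟨0, hnull.mono fun t ht => not_not.1 ht.2⟩
    exact Ultrafilter.compl_mem_iff_notMem.1 hc hS

/-- Dense embeddability strengthening of Jin's theorem: if `BD(A) = β > 0`,
then there is a set `E ⊆ ℕ = {1,2,3,…}` of Schnirelmann density at least `β`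
which is densely finitely embedded in `A`: for every finite `F ⊆ E`, the set
of shifts `t` with `t + F ⊆ A` has positive upper Banach density. -/
theorem jin_dense_embeddability (A : Set ℤ) (β : ℝ)
    (hβ : upperBanachDensity A = β) (hpos : 0 < β) :
    ∃ E : Set ℕ, (∀ m ∈ E, 1 ≤ m) ∧ β ≤ schnirelmannDensity' E ∧
      ∀ F : Finset ℕ, ↑F ⊆ E →
        0 < upperBanachDensity {t : ℤ | ∀ a ∈ F, t + (a : ℤ) ∈ A} := by
  classical
  obtain ⟨U, hgood, hU⟩ := exists_ultrafilter hβ hpos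
  refine ⟨{a | 1 ≤ a ∧ ∀ᶠ t in U, t + (a : ℤ) ∈ A}, fun m hm => hm.1, ?_, fun F hF => ?_⟩
  · refine le_ciInf fun n => ?_
    rw [ncard_eq_sum, le_div_iff₀ (by positivity)]
    have hpat : ∀ᶠ t in (U : Filter ℤ), ∀ i ∈ Finset.range (n + 1),
        (t + ((i + 1 : ℕ) : ℤ) ∈ A ↔ ∀ᶠ s in U, s + ((i + 1 : ℕ) : ℤ) ∈ A) := by
      rw [Filter.eventually_all_finset]
      intro i _
      by_cases h : ∀ᶠ s in U, s + ((i + 1 : ℕ) : ℤ) ∈ A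
      · filter_upwards [h] with t ht
        exact iff_of_true ht h
      · filter_upwards [Ultrafilter.eventually_not.2 h] with t ht
        exact iff_of_false ht h
    obtain ⟨t, ht1, ht2⟩ := (hpat.and (hgood (n + 1))).exists
    have := ht2 (n + 1) (by omega) le_rfl
    push_cast at this
    refine this.trans (Finset.sum_le_sum fun i hi => le_of_eq ?_)
    have h := ht1 i hi
    have e : t + 1 + (i : ℤ) = t + ((i + 1 : ℕ) : ℤ) := by push_cast; ring
    rw [e, Set.indicator_apply, Set.indicator_apply]
    simp only [h, Set.mem_ofPred_eq, Nat.le_add_left, true_and, Pi.one_apply]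
  · refine hU _ ?_
    exact (Filter.eventually_all_finset F).2 fun a ha => (hF ha).2
end

section
/- The equation X + Y = Z² is not injectively partition regular on ℕ: there exist r ∈ ℕ and a coloring c : ℕ → Fin r such that there are no pairwise distinct natural numbers x, y, z with c(x) = c(y) = c(z) and x + y = z². -/
/-!
Suppose `x + y = z ^ 2` with `y ≤ x`. Then `z ^ 2 / 2 ≤ x < z ^ 2`, so with `k = ⌊log₂ z⌋` and
`m = ⌊log₂ x⌋` we have `2 * k - 1 ≤ m ≤ 2 * k + 1`, that is, `k` is `m / 2` or `(m + 1) / 2`. For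
`m ≥ 2` both of these are smaller than `m`, so three colors suffice to color exponents greedily with
`m` always receiving a color different from those of `m / 2` and `(m + 1) / 2`. Coloring `n` by the
color of `⌊log₂ n⌋` then separates `x` from `z`. The case `m ≤ 1` leaves only `x, y ≤ 3`, where the
unique solution in distinct numbers is `3 + 1 = 2 ^ 2`; it is excluded by giving the exponents
`0` and `1` different colors.
-/

/-- The least of the three colors that is different from both `a` and `b`. -/
def thirdColor (a b : Fin 3) : Fin 3 :=
  if a ≠ 0 ∧ b ≠ 0 then 0 else if a ≠ 1 ∧ b ≠ 1 then 1 else 2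

lemma thirdColor_ne (a b : Fin 3) : thirdColor a b ≠ a ∧ thirdColor a b ≠ b := by
  revert a b
  decide

/-- The greedy coloring of exponents: `m ≥ 2` avoids the colors of `m / 2` and `(m + 1) / 2`. -/
def expColor : ℕ → Fin 3
  | 0 => 0
  | 1 => 1
  | n + 2 => thirdColor (expColor ((n + 2) / 2)) (expColor ((n + 3) / 2))
decreasing_by all_goals omega

lemma expColor_ne {m k : ℕ} (hm : 2 ≤ m) (h₁ : 2 * k ≤ m + 1) (h₂ : m ≤ 2 * k + 1) :
    expColor m ≠ expColor k := by
  obtain ⟨n, rfl⟩ := Nat.exists_eq_add_of_le' hm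
  rw [expColor]
  have h : k = (n + 2) / 2 ∨ k = (n + 3) / 2 := by omega
  rcases h with rfl | rfl
  · exact (thirdColor_ne _ _).1
  · exact (thirdColor_ne _ _).2

lemma log_bounds {x y z : ℕ} (hy : 0 < y) (hz : 0 < z) (hyx : y ≤ x) (h : x + y = z ^ 2) :
    2 * Nat.log 2 z ≤ Nat.log 2 x + 1 ∧ Nat.log 2 x ≤ 2 * Nat.log 2 z + 1 := by
  have hx : x ≠ 0 := by omega
  have hz₁ : 2 ^ Nat.log 2 z ≤ z := Nat.pow_log_le_self 2 hz.ne'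
  have hz₂ : z < 2 ^ (Nat.log 2 z + 1) := Nat.lt_pow_succ_log_self one_lt_two z
  have hx₁ : 2 ^ Nat.log 2 x ≤ x := Nat.pow_log_le_self 2 hx
  have hx₂ : x < 2 ^ (Nat.log 2 x + 1) := Nat.lt_pow_succ_log_self one_lt_two x
  have hs₁ := Nat.pow_le_pow_left hz₁ 2
  have hs₂ := Nat.pow_lt_pow_left hz₂ two_ne_zero
  rw [← pow_mul] at hs₁ hs₂
  constructor
  · have : 2 ^ (Nat.log 2 z * 2) < 2 ^ (Nat.log 2 x + 1 + 1) := by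
      rw [pow_succ 2 (Nat.log 2 x + 1)]
      omega
    have := (Nat.pow_lt_pow_iff_right one_lt_two).1 this
    omega
  · have : 2 ^ Nat.log 2 x < 2 ^ ((Nat.log 2 z + 1) * 2) := by omega
    have := (Nat.pow_lt_pow_iff_right one_lt_two).1 this
    omega

lemma expColor_log_ne {x y z : ℕ} (hy : 0 < y) (hz : 0 < z) (hyx : y < x)
    (h : x + y = z ^ 2) (hxy : expColor (Nat.log 2 x) = expColor (Nat.log 2 y)) :
    expColor (Nat.log 2 x) ≠ expColor (Nat.log 2 z) := by
  obtain ⟨h₁, h₂⟩ := log_bounds hy hz hyx.le h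
  by_cases hm : 2 ≤ Nat.log 2 x
  · exact expColor_ne hm h₁ h₂
  · have hx : x < 2 ^ 2 := by
      by_contra hc
      exact hm (Nat.le_log_of_pow_le one_lt_two (by omega))
    have hz₂ : z < 3 := by nlinarith
    have h31 : x = 3 ∧ y = 1 := by
      interval_cases z <;> omega
    obtain ⟨rfl, rfl⟩ := h31
    have l3 : Nat.log 2 3 = 1 := by norm_num
    have l1 : Nat.log 2 1 = 0 := by norm_num
    rw [l3, l1, expColor, expColor] at hxy
    exact absurd hxy (by decide)

/-- The equation `X + Y = Z²` is not injectively partition regular on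
`ℕ = {1,2,3,…}`: there is a finite coloring of the positive integers admitting
no pairwise distinct monochromatic solution. -/
theorem not_injective_partition_regular_XplusYeqZsq :
    ∃ (r : ℕ) (c : ℕ → Fin r),
      ¬ ∃ x y z : ℕ, 0 < x ∧ 0 < y ∧ 0 < z ∧
        x ≠ y ∧ x ≠ z ∧ y ≠ z ∧
        c x = c y ∧ c y = c z ∧ x + y = z ^ 2 := by
  refine ⟨3, fun n => expColor (Nat.log 2 n), ?_⟩
  rintro ⟨x, y, z, hx, hy, hz, hxy, -, -, cxy, cyz, h⟩
  rcases lt_or_gt_of_ne hxy with hlt | hlt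
  · exact expColor_log_ne hx hz hlt (by omega) cxy.symm cyz
  · exact expColor_log_ne hy hz hlt h cxy (cxy.trans cyz)
end

section
/- The diophantine equation X₁ − 2X₂ + X₃ = 0 is injectively partition regular on ℕ: for every finite coloring c : ℕ → Fin r there exist a ∈ ℕ and d ≥ 1 such that a, a + d, a + 2d all receive the same color; i.e., every finite coloring of ℕ admits a non-constant monochromatic 3-term arithmetic progression. -/
/-!
This is Van der Waerden's theorem for progressions of length three. Mathlib derives the general
form from Hales-Jewett as `Combinatorics.exists_mono_homothetic_copy`: in a finitely colored
commutative monoid every finite set `S` has a monochromatic homothetic copy `d • S + b`. For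
`S = {0, 1, 2}` in `ℕ` such a copy is a progression with common difference `d > 0`.
-/

/-- The equation `X₁ - 2X₂ + X₃ = 0` is injectively partition regular on
`ℕ = {1,2,3,…}`: every finite coloring of the positive integers admits a
non-constant monochromatic 3-term arithmetic progression. -/
theorem monochromatic_3AP (r : ℕ) (c : ℕ → Fin r) :
    ∃ a d : ℕ, 1 ≤ a ∧ 1 ≤ d ∧
      c a = c (a + d) ∧ c (a + d) = c (a + 2 * d) := by
  -- Van der Waerden's theorem may return `b = 0`; coloring `n` by `c (n + 1)` keeps the
  -- first term `b + 1` positive.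
  obtain ⟨d, hd, b, k, h⟩ :=
    Combinatorics.exists_mono_homothetic_copy ({0, 1, 2} : Finset ℕ) (fun n => c (n + 1))
  have h0 : c (b + 1) = k := by simpa using h 0 (by simp)
  have h1 : c (b + 1 + d) = k := by
    rw [← h 1 (by simp)]
    congr 1
    simp only [smul_eq_mul]
    ring
  have h2 : c (b + 1 + 2 * d) = k := by
    rw [← h 2 (by simp)]
    congr 1
    simp only [smul_eq_mul]
    ring
  exact ⟨b + 1, d, Nat.le_add_left 1 b, hd, h0.trans h1.symm, h1.trans h2.symm⟩
end

section
/- Let n ≥ 3 and let c₁, ..., cₙ be nonzero integers with c₁ + ... + cₙ = 0. Then the diophantine equation c₁X₁ + ... + cₙXₙ = 0 is injectively partition regular on ℕ: for every finite coloring c : ℕ → Fin r there exist pairwise distinct natural numbers x₁, ..., xₙ, all of the same color, such that c₁x₁ + ... + cₙxₙ = 0. -/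
/-!
The solution set of an equation `∑ cᵢ xᵢ = 0` with `∑ cᵢ = 0` is invariant under every affine map
`x ↦ a x + b`. So it suffices to find one injective solution `y` in `ℕ`
(`exists_injective_nat_solution`): van der Waerden's theorem, in the form
`Combinatorics.exists_mono_homothetic_copy`, gives a monochromatic homothetic copy `a y + b` of it,
which is again an injective solution.

An injective integer solution exists because no finite union of proper sublattices
`{y | yᵢ = yⱼ}` covers the solution lattice. Each of them is proper: for a third index `k`, the
solution `cₖ eᵢ - cᵢ eₖ` separates `i` from `j`. The separating solutions are combined one at a
time, by adding a generic multiple of the next one. A translation makes the result nonnegative.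
-/

/-- A third index `k` serves to balance the `i`-th coordinate without touching the `j`-th. -/
lemma exists_separating_solution {n : ℕ} (hn : 3 ≤ n) (cs : Fin n → ℤ)
    (hne : ∀ i, cs i ≠ 0) {i j : Fin n} (hij : i ≠ j) :
    ∃ z : Fin n → ℤ, ∑ l, cs l * z l = 0 ∧ z i ≠ z j := by
  obtain ⟨k, hk⟩ : ∃ k, k ∉ ({i, j} : Finset (Fin n)) := by
    by_contra! h
    have h1 : Finset.univ ⊆ ({i, j} : Finset (Fin n)) := fun k _ => h k
    have h2 := (Finset.card_le_card h1).trans Finset.card_le_two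
    rw [Finset.card_univ, Fintype.card_fin] at h2
    omega
  simp only [Finset.mem_insert, Finset.mem_singleton, not_or] at hk
  refine ⟨Pi.single i (cs k) - Pi.single k (cs i), ?_, ?_⟩
  · simp [mul_sub, Finset.sum_sub_distrib, Pi.single_apply, mul_comm]
  · simp [hij.symm, Ne.symm hk.1, Ne.symm hk.2, hne k]

lemma exists_solution_separating_pairs {n : ℕ} (hn : 3 ≤ n) (cs : Fin n → ℤ)
    (hne : ∀ i, cs i ≠ 0) (s : Finset (Fin n × Fin n)) (hs : ∀ p ∈ s, p.1 ≠ p.2) :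
    ∃ y : Fin n → ℤ, ∑ l, cs l * y l = 0 ∧ ∀ p ∈ s, y p.1 ≠ y p.2 := by
  induction s using Finset.induction_on with
  | empty => exact ⟨0, by simp⟩
  | insert q s _ ih =>
    obtain ⟨y, hy, hys⟩ := ih fun p hp => hs p (Finset.mem_insert_of_mem hp)
    obtain ⟨z, hz, hzq⟩ :=
      exists_separating_solution hn cs hne (hs q (Finset.mem_insert_self q s))
    -- For each pair, at most one value of `t` makes `y + t z` fail to separate it.
    have hfin : (⋃ p ∈ insert q s,
        {t : ℤ | y p.1 + t * z p.1 = y p.2 + t * z p.2}).Finite := by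
      refine Set.Finite.biUnion (Finset.finite_toSet _) fun p hp => Set.Subsingleton.finite ?_
      intro t ht u hu
      simp only [Set.mem_ofPred_eq] at ht hu
      have hprod : (t - u) * (z p.1 - z p.2) = 0 := by linear_combination ht - hu
      rcases mul_eq_zero.1 hprod with h | h
      · exact sub_eq_zero.1 h
      · exfalso
        have hzp : z p.1 = z p.2 := sub_eq_zero.1 h
        rcases Finset.mem_insert.1 hp with rfl | hp
        · exact hzq hzp
        · exact hys p hp (by rw [hzp] at ht; exact add_right_cancel ht)
    obtain ⟨t, ht⟩ := hfin.exists_notMem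
    refine ⟨fun l => y l + t * z l, ?_, fun p hp h => ht (Set.mem_biUnion hp h)⟩
    calc ∑ l, cs l * (y l + t * z l) = ∑ l, cs l * y l + t * ∑ l, cs l * z l := by
          rw [Finset.mul_sum, ← Finset.sum_add_distrib]
          exact Finset.sum_congr rfl fun l _ => by ring
      _ = 0 := by rw [hy, hz]; ring

lemma exists_injective_nat_solution {n : ℕ} (hn : 3 ≤ n) (cs : Fin n → ℤ)
    (hne : ∀ i, cs i ≠ 0) (hsum : ∑ i, cs i = 0) :
    ∃ y : Fin n → ℕ, Function.Injective y ∧ ∑ i, cs i * (y i : ℤ) = 0 := by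
  obtain ⟨y, hy, hsep⟩ := exists_solution_separating_pairs hn cs hne
    (Finset.univ.filter fun p => p.1 ≠ p.2) (by simp)
  have hnonneg : ∀ i, 0 ≤ y i + ∑ j, |y j| := fun i => by
    have h1 := Finset.single_le_sum (f := fun j => |y j|) (fun j _ => abs_nonneg (y j))
      (Finset.mem_univ i)
    have h2 := neg_abs_le (y i)
    linarith
  refine ⟨fun i => (y i + ∑ j, |y j|).toNat, fun i j hij => ?_, ?_⟩
  · by_contra h
    have hi := hnonneg i
    have hj := hnonneg j
    exact hsep (i, j) (by simpa using h) (by simp only at hij ⊢; omega)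
  · simp only [Int.toNat_of_nonneg (hnonneg _), mul_add, Finset.sum_add_distrib]
    rw [hy, ← Finset.sum_mul, hsum]
    ring

/-- If `n ≥ 3` and `c₁, …, cₙ` are nonzero integers with `c₁ + … + cₙ = 0`,
then the equation `c₁X₁ + … + cₙXₙ = 0` is injectively partition regular on
`ℕ = {1,2,3,…}`: every finite coloring of the positive integers admits
pairwise distinct monochromatic positive integers `x₁, …, xₙ` with
`c₁x₁ + … + cₙxₙ = 0`. -/
theorem rado_zero_sum (n : ℕ) (hn : 3 ≤ n) (cs : Fin n → ℤ)
    (hne : ∀ i, cs i ≠ 0) (hsum : ∑ i, cs i = 0)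
    (r : ℕ) (col : ℕ → Fin r) :
    ∃ x : Fin n → ℕ, (∀ i, 1 ≤ x i) ∧ Function.Injective x ∧
      (∀ i j, col (x i) = col (x j)) ∧
      ∑ i, cs i * (x i : ℤ) = 0 := by
  obtain ⟨y, hinj, hy⟩ := exists_injective_nat_solution hn cs hne hsum
  -- The shifted coloring `m ↦ col (m + 1)` keeps the homothetic copy away from `0`.
  obtain ⟨a, ha, b, c, hc⟩ := Combinatorics.exists_mono_homothetic_copy
    (Finset.univ.image y) (fun m => col (m + 1))
  have hcol : ∀ i, col (a * y i + b + 1) = c := fun i =>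
    hc (y i) (Finset.mem_image_of_mem y (Finset.mem_univ i))
  refine ⟨fun i => a * y i + b + 1, fun i => by simp, fun i j hij => ?_,
    fun i j => (hcol i).trans (hcol j).symm, ?_⟩
  · exact hinj (Nat.eq_of_mul_eq_mul_left ha (by simp only at hij; omega))
  · calc ∑ i, cs i * ((a * y i + b + 1 : ℕ) : ℤ)
        = a * ∑ i, cs i * (y i : ℤ) + (∑ i, cs i) * (b + 1) := by
          rw [Finset.mul_sum, Finset.sum_mul, ← Finset.sum_add_distrib]
          exact Finset.sum_congr rfl fun i _ => by push_cast; ring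
      _ = 0 := by rw [hy, hsum]; ring
end

section
/- Finite embeddability is preserved by difference sets: if X, X', Y, Y' ⊆ ℤ, X is finitely embeddable in Y, and X' is finitely embeddable in Y', then X − X' is finitely embeddable in Y − Y', where X − X' = {x − x' : x ∈ X, x' ∈ X'}. -/
/-- `X` is finitely embeddable in `Y` if every finite subset of `X` has a
shifted copy inside `Y`. -/
def FinEmbeddable (X Y : Set ℤ) : Prop :=
  ∀ F : Finset ℤ, ↑F ⊆ X → ∃ t : ℤ, ∀ a ∈ F, t + a ∈ Y

/-- Finite embeddability is preserved by difference sets: if `X ⊴ Y` and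
`X' ⊴ Y'`, then `X - X' ⊴ Y - Y'`. -/
theorem finEmbeddable_sub (X X' Y Y' : Set ℤ)
    (h : FinEmbeddable X Y) (h' : FinEmbeddable X' Y') :
    FinEmbeddable {z : ℤ | ∃ x ∈ X, ∃ x' ∈ X', z = x - x'}
      {z : ℤ | ∃ y ∈ Y, ∃ y' ∈ Y', z = y - y'} := by
  intro F hF
  have hF' : ∀ a ∈ F, ∃ x ∈ X, ∃ x' ∈ X', a = x - x' := fun a ha => hF ha
  choose! f hf g hg hfg using hF'
  -- The chosen representatives `a = f a - g a` for `a ∈ F` form finite subsets of `X` and `X'`.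
  -- If `t` and `t'` shift them into `Y` and `Y'`, then `t - t'` shifts `F` into the differences.
  obtain ⟨t, ht⟩ := h (F.image f) (by simpa [Set.subset_def] using hf)
  obtain ⟨t', ht'⟩ := h' (F.image g) (by simpa [Set.subset_def] using hg)
  refine ⟨t - t', fun a ha => ⟨t + f a, ht _ (Finset.mem_image_of_mem f ha),
    t' + g a, ht' _ (Finset.mem_image_of_mem g ha), ?_⟩⟩
  have := hfg a ha
  lia
end

section
/- A set Y ⊆ ℤ is maximal with respect to finite embeddability if and only if it is thick: Y is thick if and only if every set X ⊆ ℤ is finitely embeddable in Y. -/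
/-- A set is maximal with respect to finite embeddability if and only if it is
thick. -/
theorem thick_iff_finEmbeddable_maximal (Y : Set ℤ) :
    Thick Y ↔ ∀ X : Set ℤ, FinEmbeddable X Y := by
  constructor
  · intro hY X F _
    -- `F` lies in `[-M, M]`, so an interval of length `2 * M + 1` has room for a shift of `F`.
    let M : ℕ := ∑ a ∈ F, a.natAbs
    obtain ⟨x, hx⟩ := hY (2 * M + 1)
    refine ⟨x + M, fun a ha => hx ?_⟩
    have h : a.natAbs ≤ M :=
      Finset.single_le_sum (f := Int.natAbs) (fun _ _ => Nat.zero_le _) ha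
    rw [Set.mem_Ico]
    push_cast
    omega
  · intro h n
    -- A shift of `[0, n)` into `Y` is an interval of length `n` in `Y`.
    obtain ⟨t, ht⟩ := h Set.univ (Finset.Ico 0 (n : ℤ)) (Set.subset_univ _)
    refine ⟨t, fun y hy => ?_⟩
    rw [Set.mem_Ico] at hy
    have hmem := ht (y - t) (by rw [Finset.mem_Ico]; omega)
    rwa [add_sub_cancel] at hmem
end

section
/- Jin's sumset theorem: if A, B ⊆ ℤ both have positive upper Banach density, then the sumset A + B = {a + b : a ∈ A, b ∈ B} is piecewise syndetic. -/
open Filter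

/-- A set containing translates of arbitrarily long windows of a syndetic set is piecewise
syndetic. -/
lemma piecewiseSyndetic_of_windows (C D : Set ℤ) (hD : Syndetic D)
    (h : ∀ M : ℕ, ∃ t : ℤ, ∀ z ∈ D, |z| ≤ M → z + t ∈ C) : PiecewiseSyndetic C := by
  obtain ⟨k, hk⟩ := hD
  choose t ht using h
  -- Windows shorter than `k` are left out, so that a point of `W` always lies in a subinterval
  -- of length `k` of a single window.
  let W : Set ℤ := {y | ∃ M : ℕ, k ≤ M ∧ |y - t M| ≤ M}
  refine ⟨C ∪ W, C ∪ Wᶜ, ?_, ⟨2 * k + 1, ?_⟩, ?_⟩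
  · intro n
    refine ⟨t (n + k), fun y hy => Or.inr ⟨n + k, by omega, ?_⟩⟩
    rw [Set.mem_Ico] at hy
    rw [abs_le]
    push_cast
    omega
  · intro x
    by_cases hx : x + k ∈ W
    · obtain ⟨M, hkM, hM⟩ := hx
      rw [abs_le] at hM
      rcases le_total (x + k) (t M) with hle | hle
      · obtain ⟨z, hz, hzD⟩ := hk (x + k - t M)
        rw [Set.mem_Ico] at hz
        refine ⟨z + t M, ?_, Or.inl (ht M z hzD ?_)⟩
        · rw [Set.mem_Ico]; push_cast; omega
        · rw [abs_le]; omega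
      · obtain ⟨z, hz, hzD⟩ := hk (x - t M)
        rw [Set.mem_Ico] at hz
        refine ⟨z + t M, ?_, Or.inl (ht M z hzD ?_)⟩
        · rw [Set.mem_Ico]; push_cast; omega
        · rw [abs_le]; omega
    · refine ⟨x + k, ?_, Or.inr hx⟩
      rw [Set.mem_Ico]; push_cast; omega
  · ext y
    simp only [Set.mem_inter_iff, Set.mem_union, Set.mem_compl_iff]
    tauto

lemma exists_dense_interval (A : Set ℤ) (hA : 0 < upperBanachDensity A) :
    ∃ a : ℝ, 0 < a ∧ ∀ n : ℕ, ∃ (x : ℤ) (S : Finset ℤ), (S : Set ℤ) ⊆ A ∧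
      S ⊆ Finset.Icc (x + 1) (x + n + 1) ∧ a * (n + 1) ≤ S.card := by
  refine ⟨upperBanachDensity A / 2, by linarith, fun n => ?_⟩
  have hbdd : BddBelow (Set.range fun n : ℕ => ⨆ x : ℤ,
      ((A ∩ Set.Icc (x + 1) (x + (n : ℤ) + 1)).ncard : ℝ) / ((n : ℝ) + 1)) := by
    refine ⟨0, ?_⟩
    rintro _ ⟨n, rfl⟩
    exact Real.iSup_nonneg fun x => by positivity
  have h1 : upperBanachDensity A / 2 < ⨆ x : ℤ,
      ((A ∩ Set.Icc (x + 1) (x + (n : ℤ) + 1)).ncard : ℝ) / ((n : ℝ) + 1) :=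
    (half_lt_self hA).trans_le (ciInf_le hbdd n)
  obtain ⟨x, hx⟩ := exists_lt_of_lt_ciSup h1
  have hfin : (A ∩ Set.Icc (x + 1) (x + (n : ℤ) + 1)).Finite :=
    (Set.finite_Icc _ _).subset Set.inter_subset_right
  refine ⟨x, hfin.toFinset, ?_, ?_, ?_⟩
  · rw [hfin.coe_toFinset]; exact Set.inter_subset_left
  · intro y hy
    rw [hfin.mem_toFinset] at hy
    exact Finset.mem_Icc.2 hy.2
  · rw [← Set.ncard_eq_toFinset_card _ hfin]
    rw [lt_div_iff₀ (by positivity)] at hx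
    exact hx.le

/-- In every length there is a uniformly dense set all of whose differences lie in a single
translate of the sumset. -/
lemma exists_dense_shifted_difference (A B : Set ℤ)
    (hA : 0 < upperBanachDensity A) (hB : 0 < upperBanachDensity B) :
    ∃ c : ℝ, 0 < c ∧ ∀ n : ℕ, ∃ (x t : ℤ) (E : Finset ℤ),
      E ⊆ Finset.Icc (x + 1) (x + n + 1) ∧ c * (n + 1) ≤ E.card ∧
      ∀ e ∈ E, ∀ e' ∈ E, ∃ a ∈ A, ∃ b ∈ B, e - e' + t = a + b := by
  obtain ⟨a, ha, hA⟩ := exists_dense_interval A hA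
  obtain ⟨b, hb, hB⟩ := exists_dense_interval B hB
  refine ⟨a * b / 2, by positivity, fun n => ?_⟩
  obtain ⟨x, S, hSA, hS, hSc⟩ := hA n
  obtain ⟨y, T, hTB, hT, hTc⟩ := hB n
  have hmaps : ∀ p ∈ S ×ˢ T, p.1 + p.2 ∈ Finset.Icc (x + y + 2) (x + y + 2 * n + 2) := by
    intro p hp
    rw [Finset.mem_product] at hp
    have h1 := Finset.mem_Icc.1 (hS hp.1)
    have h2 := Finset.mem_Icc.1 (hT hp.2)
    rw [Finset.mem_Icc]
    omega
  have hcard : (Finset.Icc (x + y + 2) (x + y + 2 * n + 2)).card = 2 * n + 1 := by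
    rw [Int.card_Icc]; omega
  obtain ⟨t, -, ht⟩ := Finset.exists_le_card_fiber_of_nsmul_le_card_of_maps_to
    (M := ℝ) (b := a * b / 2 * (n + 1)) hmaps ⟨x + y + 2, by rw [Finset.mem_Icc]; omega⟩ (by
      rw [hcard, Finset.card_product, nsmul_eq_mul]
      push_cast
      have h1 : (a * (n + 1)) * (b * (n + 1)) ≤ (S.card : ℝ) * T.card := by gcongr
      have h2 : 0 ≤ a * b * (n + 1) := by positivity
      nlinarith)
  refine ⟨x, t, S.filter (fun e => t - e ∈ T), (Finset.filter_subset _ _).trans hS, ?_, ?_⟩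
  · refine ht.trans ?_
    norm_cast
    refine Finset.card_le_card_of_injOn Prod.fst ?_ ?_
    · intro p hp
      simp only [Finset.coe_filter, Finset.mem_product, Set.mem_ofPred_eq] at hp ⊢
      refine ⟨hp.1.1, ?_⟩
      rw [← hp.2, add_sub_cancel_left]
      exact hp.1.2
    · intro p hp q hq hpq
      simp only [Finset.coe_filter, Finset.mem_product, Set.mem_ofPred_eq] at hp hq
      ext
      · exact hpq
      · linarith [hp.2, hq.2]
  · intro e he e' he'
    rw [Finset.mem_filter] at he he'
    exact ⟨e, hSA he.1, t - e', hTB he'.2, by ring⟩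

/-- The limit, along a nonprincipal ultrafilter, of the difference sets of the `E n`. -/
def limitDifferences (E : ℕ → Finset ℤ) : Set ℤ :=
  {z | ∀ᶠ n in (hyperfilter ℕ : Filter ℕ), ∃ e ∈ E n, ∃ e' ∈ E n, z = e - e'}

/-- If no two distinct elements of `F` differ by a limit difference, then for suitable `n` the
translates of `E n` by the elements of `F` are pairwise disjoint, which bounds their number. -/
lemma card_le_of_differences_notMem (E : ℕ → Finset ℤ) (x : ℕ → ℤ) (c : ℝ) (hc : 0 < c)
    (hE : ∀ n, E n ⊆ Finset.Icc (x n + 1) (x n + n + 1))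
    (hcard : ∀ n, c * (n + 1) ≤ (E n).card) (F : Finset ℤ)
    (hF : ∀ f ∈ F, ∀ f' ∈ F, f ≠ f' → f - f' ∉ limitDifferences E) :
    F.card ≤ ⌊2 / c⌋₊ := by
  obtain ⟨m, hm⟩ : ∃ m : ℕ, ∀ f ∈ F, |f| ≤ m := by
    refine ⟨F.sup Int.natAbs, fun f hf => ?_⟩
    rw [Int.abs_eq_natAbs]
    exact_mod_cast Finset.le_sup (f := Int.natAbs) hf
  have hev : ∀ᶠ n in (hyperfilter ℕ : Filter ℕ), ∀ f ∈ F, ∀ f' ∈ F, f ≠ f' →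
      ¬ ∃ e ∈ E n, ∃ e' ∈ E n, f - f' = e - e' := by
    rw [Filter.eventually_all_finset]
    intro f hf
    rw [Filter.eventually_all_finset]
    intro f' hf'
    by_cases hne : f = f'
    · exact Eventually.of_forall fun n h => absurd hne h
    · filter_upwards [Ultrafilter.eventually_not.2 (hF f hf f' hf' hne)] with n hn _ using hn
  have hlarge : ∀ᶠ n in (hyperfilter ℕ : Filter ℕ), 2 * m ≤ n :=
    Nat.hyperfilter_le_atTop (eventually_ge_atTop _)
  obtain ⟨n, hn, hmn⟩ := (hev.and hlarge).exists
  have hinj : Set.InjOn (fun p : ℤ × ℤ => p.1 + p.2) (F ×ˢ E n : Finset (ℤ × ℤ)) := by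
    intro p hp q hq hpq
    simp only [Finset.coe_product, Set.mem_prod, Finset.mem_coe] at hp hq hpq
    have h1 : p.1 = q.1 := by
      by_contra hne
      exact hn _ hp.1 _ hq.1 hne ⟨q.2, hq.2, p.2, hp.2, by linarith⟩
    ext
    · exact h1
    · linarith
  have hle : F.card * (E n).card ≤ 2 * n + 1 := by
    rw [← Finset.card_product, ← Finset.card_image_of_injOn hinj]
    have hsub : (F ×ˢ E n).image (fun p : ℤ × ℤ => p.1 + p.2) ⊆
        Finset.Icc (x n + 1 - m) (x n + n + 1 + m) := by
      intro z hz
      obtain ⟨p, hp, rfl⟩ := Finset.mem_image.1 hz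
      rw [Finset.mem_product] at hp
      have h1 := abs_le.1 (hm _ hp.1)
      have h2 := Finset.mem_Icc.1 (hE n hp.2)
      rw [Finset.mem_Icc]
      omega
    refine (Finset.card_le_card hsub).trans ?_
    rw [Int.card_Icc]
    omega
  refine Nat.le_floor ?_
  rw [le_div_iff₀ hc]
  have h1 : (F.card : ℝ) * (E n).card ≤ 2 * n + 1 := by exact_mod_cast hle
  have h2 : (F.card : ℝ) * (c * (n + 1)) ≤ F.card * (E n).card := by
    gcongr
    exact hcard n
  have h3 : (0 : ℝ) < n + 1 := by positivity
  refine le_of_mul_le_mul_right ?_ h3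
  linarith

/-- Limits of difference sets of uniformly dense sets are syndetic. -/
lemma syndetic_limit_differences (E : ℕ → Finset ℤ) (x : ℕ → ℤ) (c : ℝ) (hc : 0 < c)
    (hE : ∀ n, E n ⊆ Finset.Icc (x n + 1) (x n + n + 1))
    (hcard : ∀ n, c * (n + 1) ≤ (E n).card) : Syndetic (limitDifferences E) := by
  let P : Finset ℤ → Prop := fun F =>
    ∀ f ∈ F, ∀ f' ∈ F, f ≠ f' → f - f' ∉ limitDifferences E
  let N : Set ℕ := {k | ∃ F, P F ∧ F.card = k}
  have hbdd : BddAbove N := by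
    refine ⟨⌊2 / c⌋₊, ?_⟩
    rintro _ ⟨F, hF, rfl⟩
    exact card_le_of_differences_notMem E x c hc hE hcard F hF
  obtain ⟨F, hF, hFc⟩ : sSup N ∈ N := Nat.sSup_mem ⟨0, ∅, by simp [P], rfl⟩ hbdd
  have hzero : (0 : ℤ) ∈ limitDifferences E := by
    refine Eventually.of_forall fun n => ?_
    have hpos : (0 : ℝ) < (E n).card := lt_of_lt_of_le (by positivity) (hcard n)
    obtain ⟨e, he⟩ := Finset.card_pos.1 (by exact_mod_cast hpos)
    exact ⟨e, he, e, he, by ring⟩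
  have hneg : ∀ z, -z ∈ limitDifferences E → z ∈ limitDifferences E := by
    intro z hz
    refine Eventually.mono hz ?_
    rintro n ⟨e, he, e', he', h⟩
    exact ⟨e', he', e, he, by linarith⟩
  have hcover : ∀ y : ℤ, ∃ f ∈ F, y - f ∈ limitDifferences E := by
    intro y
    by_contra! hy
    have hyF : y ∉ F := fun h => hy y h (by rwa [sub_self])
    have hP : P (insert y F) := by
      intro f hf f' hf' hne
      rcases Finset.mem_insert.1 hf with rfl | hfF <;>
        rcases Finset.mem_insert.1 hf' with rfl | hfF'
      · exact absurd rfl hne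
      · exact hy _ hfF'
      · exact fun h => hy _ hfF (hneg _ (by rwa [neg_sub]))
      · exact hF _ hfF _ hfF' hne
    have hle := le_csSup hbdd ⟨_, hP, rfl⟩
    rw [Finset.card_insert_of_notMem hyF] at hle
    omega
  obtain ⟨m, hm⟩ : ∃ m : ℕ, ∀ f ∈ F, |f| ≤ m := by
    refine ⟨F.sup Int.natAbs, fun f hf => ?_⟩
    rw [Int.abs_eq_natAbs]
    exact_mod_cast Finset.le_sup (f := Int.natAbs) hf
  refine ⟨2 * m + 1, fun y => ?_⟩
  obtain ⟨f, hf, hfD⟩ := hcover (y + m)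
  have hfm := abs_le.1 (hm f hf)
  refine ⟨y + m - f, ?_, hfD⟩
  rw [Set.mem_Ico]
  push_cast
  omega

/-- Jin's sumset theorem: the sumset of two sets of integers of positive upper
Banach density is piecewise syndetic. -/
theorem jin_sumset (A B : Set ℤ)
    (hA : 0 < upperBanachDensity A) (hB : 0 < upperBanachDensity B) :
    PiecewiseSyndetic {z : ℤ | ∃ a ∈ A, ∃ b ∈ B, z = a + b} := by
  obtain ⟨c, hc, h⟩ := exists_dense_shifted_difference A B hA hB
  choose x t E hE hcard hsum using h
  refine piecewiseSyndetic_of_windows _ _ (syndetic_limit_differences E x c hc hE hcard) ?_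
  intro M
  have hev : ∀ᶠ n in (hyperfilter ℕ : Filter ℕ), ∀ z ∈ Finset.Icc (-(M : ℤ)) M,
      z ∈ limitDifferences E → ∃ e ∈ E n, ∃ e' ∈ E n, z = e - e' := by
    rw [Filter.eventually_all_finset]
    intro z _
    by_cases hz : z ∈ limitDifferences E
    · exact Eventually.mono hz fun n hn _ => hn
    · exact Eventually.of_forall fun n h => absurd h hz
  obtain ⟨n, hn⟩ := hev.exists
  refine ⟨t n, fun z hz hzM => ?_⟩
  obtain ⟨e, he, e', he', rfl⟩ := hn z (Finset.mem_Icc.2 (abs_le.1 hzM)) hz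
  exact hsum n e he e' he'
end

section
/- Every piecewise syndetic set contains arbitrarily long arithmetic progressions: if A ⊆ ℤ is piecewise syndetic, then for every k ∈ ℕ there exist a ∈ ℤ and d ≥ 1 such that a, a + d, ..., a + (k−1)d all belong to A. -/
/-- Along a combinatorial line over the alphabet `Fin k`, the sum of the coordinates is an affine
function of the parameter, with slope the (positive) number of active coordinates. -/
lemma line_sum {k : ℕ} {ι : Type} [Fintype ι] (l : Combinatorics.Line (Fin k) ι) :
    ∃ b d : ℤ, 1 ≤ d ∧ ∀ j : Fin k, ∑ i, ((l j i : ℕ) : ℤ) = b + (j : ℕ) * d := by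
  classical
  refine ⟨∑ i, (l.idxFun i).elim 0 (fun a => ((a : ℕ) : ℤ)),
    ∑ i, if l.idxFun i = none then 1 else 0, ?_, fun j => ?_⟩
  · obtain ⟨i₀, hi₀⟩ := l.proper
    calc (1 : ℤ) = if l.idxFun i₀ = none then 1 else 0 := by simp [hi₀]
      _ ≤ _ := Finset.single_le_sum (f := fun i => if l.idxFun i = none then (1 : ℤ) else 0)
        (fun i _ => by split_ifs <;> simp) (Finset.mem_univ i₀)
  · rw [Finset.mul_sum, ← Finset.sum_add_distrib]
    refine Finset.sum_congr rfl fun i _ => ?_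
    rw [Combinatorics.Line.apply_def]
    cases h : l.idxFun i <;> simp [h]

/-- Every piecewise syndetic set of integers contains arbitrarily long
arithmetic progressions. -/
theorem piecewiseSyndetic_arithmetic_progressions (A : Set ℤ)
    (hA : PiecewiseSyndetic A) :
    ∀ k : ℕ, ∃ (a d : ℤ), 1 ≤ d ∧ ∀ i : ℕ, i < k → a + (i : ℤ) * d ∈ A := by
  obtain ⟨T, S, hT, ⟨m, hS⟩, rfl⟩ := hA
  intro k
  have hc : ∀ y : ℤ, ∃ c : Fin m, y + (c : ℕ) ∈ S := by
    intro y
    obtain ⟨z, ⟨h1, h2⟩, hz⟩ := hS y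
    refine ⟨⟨(z - y).toNat, by omega⟩, ?_⟩
    have : y + ((z - y).toNat : ℤ) = z := by omega
    rwa [this]
  -- `c` is the offset colouring
  choose c hc using hc
  obtain ⟨ι, _, hι⟩ := Combinatorics.Line.exists_mono_in_high_dimension (Fin k) (Fin m)
  obtain ⟨x, hx⟩ := hT (Fintype.card ι * k + m)
  obtain ⟨l, c₀, hl⟩ := hι fun v => c (x + ∑ i, ((v i : ℕ) : ℤ))
  obtain ⟨b, d, hd, hbd⟩ := line_sum l
  refine ⟨x + b + (c₀ : ℕ), d, hd, fun j hj => ?_⟩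
  have hsum := hbd ⟨j, hj⟩
  have hmem := hc (x + ∑ i, ((l ⟨j, hj⟩ i : ℕ) : ℤ))
  rw [show c (x + ∑ i, ((l ⟨j, hj⟩ i : ℕ) : ℤ)) = c₀ from hl ⟨j, hj⟩] at hmem
  have hnonneg : 0 ≤ ∑ i, ((l ⟨j, hj⟩ i : ℕ) : ℤ) := Finset.sum_nonneg fun i _ => by positivity
  have hle : ∑ i, ((l ⟨j, hj⟩ i : ℕ) : ℤ) ≤ (Fintype.card ι : ℤ) * k := by
    have := Finset.sum_le_card_nsmul Finset.univ (fun i => ((l ⟨j, hj⟩ i : ℕ) : ℤ)) (k : ℤ)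
      fun i _ => by exact_mod_cast (l ⟨j, hj⟩ i).isLt.le
    simpa using this
  have hc₀ : ((c₀ : ℕ) : ℤ) < m := by exact_mod_cast c₀.isLt
  have heq : x + b + (c₀ : ℕ) + (j : ℤ) * d
      = x + ∑ i, ((l ⟨j, hj⟩ i : ℕ) : ℤ) + (c₀ : ℕ) := by
    rw [hsum]; ring
  rw [heq]
  refine ⟨hx ⟨by omega, ?_⟩, hmem⟩
  push_cast
  linarith
end
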